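/- Let n ≥ 3, γ ≥ 2n/(n+2), A > 0, c > 0, S₀ ∈ ℝ, m > 0. Let ρ, S : ℝⁿ → ℝ be measurable with ρ ≥ 0, S(x) ≥ S₀ and ∫ρ dx = m, and let u : ℝⁿ → ℝⁿ be measurable with ρu integrable and |u|^{2n/(n−2)} integrable. Set E_i = (A/(γ−1))∫ e^{S/c} ρ^γ dx (assumed finite). Then there exists a constant K₁ > 0 depending only on γ, n, m, S₀, A and c such that |∫_{ℝⁿ} ρ u dx| ≤ K₁ · E_i^{(n−2)/(2n(γ−1))} · (∫_{ℝⁿ} |u|^{2n/(n−2)} dx)^{(n−2)/(2n)}. -/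

import Mathlib

/-!
Write `r = 2n/(n+2)`, whose conjugate exponent is `2n/(n-2)`, and `θ = (r-1)/(γ-1) ∈ (0,1]`. Then
`|∫ρu| ≤ ∫ρ|u| ≤ (∫ρ^r)^{1/r} (∫|u|^{2n/(n-2)})^{(n-2)/(2n)}` by Hölder. Since
`r = (1-θ) + γθ`, a second use of Hölder (equivalent to Jensen for the probability measure
`(ρ/m) dx`) gives `∫ρ^r ≤ m^{1-θ} (∫ρ^γ)^θ`, and `S ≥ S₀` gives
`∫ρ^γ ≤ e^{-S₀/c} ∫e^{S/c}ρ^γ`. Here `θ/r = (n-2)/(2n(γ-1))`, the claimed exponent.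
Both uses of Hölder are instances of `integral_geom_mean_le`.
-/

open MeasureTheory Filter Asymptotics Real

noncomputable section

/-- Physical space `ℝⁿ`. -/
abbrev Spc (n : ℕ) := Fin n → ℝ

/-- Partial derivative `∂_i f` of a scalar field. -/
noncomputable def pd {n : ℕ} (i : Fin n) (f : Spc n → ℝ) (x : Spc n) : ℝ :=
  fderiv ℝ f x (Pi.single i 1)

/-- Hölder's inequality in the weighted geometric mean form `∫ f^a g^b ≤ (∫f)^a (∫g)^b`,
`a + b = 1`. The endpoint `a = 0` is included because it occurs when
`γ = 2n/(n+2)`. -/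
lemma integral_geom_mean_le {α : Type*} [MeasurableSpace α] {μ : Measure α} {f g : α → ℝ}
    (hf : Integrable f μ) (hg : Integrable g μ) (hf0 : ∀ x, 0 ≤ f x) (hg0 : ∀ x, 0 ≤ g x)
    {a b : ℝ} (ha : 0 ≤ a) (hb : 0 ≤ b) (hab : a + b = 1) :
    Integrable (fun x => f x ^ a * g x ^ b) μ ∧
      ∫ x, f x ^ a * g x ^ b ∂μ ≤ (∫ x, f x ∂μ) ^ a * (∫ x, g x ∂μ) ^ b := by
  have h0 : ∀ x, 0 ≤ f x ^ a * g x ^ b := fun x =>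
    mul_nonneg (rpow_nonneg (hf0 x) _) (rpow_nonneg (hg0 x) _)
  have hint : Integrable (fun x => f x ^ a * g x ^ b) μ := by
    refine Integrable.mono' ((hf.const_mul a).add (hg.const_mul b))
      ((hf.aemeasurable.pow_const a).mul (hg.aemeasurable.pow_const b)).aestronglyMeasurable
      (Eventually.of_forall fun x => ?_)
    rw [Real.norm_of_nonneg (h0 x)]
    exact Real.geom_mean_le_arith_mean2_weighted ha hb (hf0 x) (hg0 x) hab
  refine ⟨hint, ?_⟩
  have hF : 0 ≤ ∫ x, f x ∂μ := integral_nonneg hf0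
  have hG : 0 ≤ ∫ x, g x ∂μ := integral_nonneg hg0
  rw [← ENNReal.ofReal_le_ofReal_iff (mul_nonneg (rpow_nonneg hF _) (rpow_nonneg hG _)),
    ENNReal.ofReal_mul (rpow_nonneg hF _), ← ENNReal.ofReal_rpow_of_nonneg hF ha,
    ← ENNReal.ofReal_rpow_of_nonneg hG hb,
    ofReal_integral_eq_lintegral_ofReal hint (Eventually.of_forall h0),
    ofReal_integral_eq_lintegral_ofReal hf (Eventually.of_forall hf0),
    ofReal_integral_eq_lintegral_ofReal hg (Eventually.of_forall hg0)]
  refine le_trans (le_of_eq ?_) (ENNReal.lintegral_mul_norm_pow_le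
    hf.aemeasurable.ennreal_ofReal hg.aemeasurable.ennreal_ofReal ha hb hab)
  refine lintegral_congr fun x => ?_
  rw [ENNReal.ofReal_mul (rpow_nonneg (hf0 x) _), ENNReal.ofReal_rpow_of_nonneg (hf0 x) ha,
    ENNReal.ofReal_rpow_of_nonneg (hg0 x) hb]

/-- `|∫ F| ≤ ∫ |F|` for the Euclidean norm on `ℝⁿ`, with `F = ρ u` and `ρ ≥ 0`. -/
lemma sqrt_sum_integral_sq_le {α ι : Type*} [Fintype ι] [MeasurableSpace α] {μ : Measure α}
    {ρ : α → ℝ} {u : α → ι → ℝ} (hρ0 : ∀ x, 0 ≤ ρ x)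
    (hu : ∀ i, Integrable (fun x => ρ x * u x i) μ)
    (hw : Integrable (fun x => ρ x * Real.sqrt (∑ i, (u x i) ^ 2)) μ) :
    Real.sqrt (∑ i, (∫ x, ρ x * u x i ∂μ) ^ 2) ≤
      ∫ x, ρ x * Real.sqrt (∑ i, (u x i) ^ 2) ∂μ := by
  set v : ι → ℝ := fun i => ∫ x, ρ x * u x i ∂μ with hv
  set N := Real.sqrt (∑ i, v i ^ 2) with hN
  set W := ∫ x, ρ x * Real.sqrt (∑ i, (u x i) ^ 2) ∂μ with hW
  have hW0 : 0 ≤ W := integral_nonneg fun x => mul_nonneg (hρ0 x) (Real.sqrt_nonneg _)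
  have hN2 : N * N = ∑ i, v i ^ 2 :=
    Real.mul_self_sqrt (Finset.sum_nonneg fun i _ => sq_nonneg _)
  -- Pair with `v = ∫ ρu` itself: `|v|² = ∫ ρ (u·v) ≤ |v| ∫ ρ|u|`.
  have key : N * N ≤ N * W := by
    have e : ∑ i, v i ^ 2 = ∫ x, ∑ i, v i * (ρ x * u x i) ∂μ := by
      rw [integral_finsetSum _ fun i _ => (hu i).const_mul (v i)]
      refine Finset.sum_congr rfl fun i _ => ?_
      rw [integral_const_mul, sq]
    rw [hN2, e, hW, ← integral_const_mul]
    refine integral_mono (integrable_finsetSum _ fun i _ => (hu i).const_mul (v i))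
      (hw.const_mul N) fun x => ?_
    have cs := Real.sum_mul_le_sqrt_mul_sqrt Finset.univ v (u x)
    calc ∑ i, v i * (ρ x * u x i) = ρ x * ∑ i, v i * u x i := by
          rw [Finset.mul_sum]; exact Finset.sum_congr rfl fun i _ => by ring
      _ ≤ ρ x * (N * Real.sqrt (∑ i, (u x i) ^ 2)) := mul_le_mul_of_nonneg_left cs (hρ0 x)
      _ = N * (ρ x * Real.sqrt (∑ i, (u x i) ^ 2)) := by ring
  rcases (Real.sqrt_nonneg _ : 0 ≤ N).eq_or_lt with h | h
  · exact h.symm.le.trans hW0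
  · exact le_of_mul_le_mul_left key h

/-- **Inequality (3.17).** There is `K₁ > 0` depending only on `γ, n, m, S₀, A, c` with
`|∫ρu| ≤ K₁ E_i^{(n−2)/(2n(γ−1))} (∫|u|^{2n/(n−2)})^{(n−2)/(2n)}`. -/
theorem momentum_holder_bound (n : ℕ) (hn : 3 ≤ n) (γ A c S₀ m : ℝ)
    (hγ : 2 * (n : ℝ) / ((n : ℝ) + 2) ≤ γ) (hA : 0 < A) (hc : 0 < c) (hm : 0 < m) :
    ∃ K₁ > (0 : ℝ), ∀ (ρ S : Spc n → ℝ) (u : Spc n → Fin n → ℝ),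
      Measurable ρ → Measurable S → (∀ i, Measurable fun x : Spc n => u x i) →
      (∀ x, 0 ≤ ρ x) → (∀ x, S₀ ≤ S x) →
      Integrable ρ → (∫ x : Spc n, ρ x) = m →
      (∀ i, Integrable fun x : Spc n => ρ x * u x i) →
      Integrable (fun x : Spc n => (∑ i, (u x i) ^ 2) ^ ((n : ℝ) / ((n : ℝ) - 2))) →
      Integrable (fun x : Spc n => Real.exp (S x / c) * ρ x ^ γ) →
      Real.sqrt (∑ i, (∫ x : Spc n, ρ x * u x i) ^ 2) ≤
        K₁ * ((A / (γ - 1)) * ∫ x : Spc n, Real.exp (S x / c) * ρ x ^ γ) ^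
            (((n : ℝ) - 2) / (2 * (n : ℝ) * (γ - 1))) *
          (∫ x : Spc n, (∑ i, (u x i) ^ 2) ^ ((n : ℝ) / ((n : ℝ) - 2))) ^
            (((n : ℝ) - 2) / (2 * (n : ℝ))) := by
  have hn3 : (3 : ℝ) ≤ n := by exact_mod_cast hn
  have hn2 : (0 : ℝ) < (n : ℝ) - 2 := by linarith
  have hnp : (0 : ℝ) < (n : ℝ) := by linarith
  obtain ⟨r, hr⟩ : ∃ r : ℝ, r = 2 * (n : ℝ) / ((n : ℝ) + 2) := ⟨_, rfl⟩
  have hr1 : 1 < r := by rw [hr, lt_div_iff₀ (by linarith)]; linarith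
  have hr0 : 0 < r := by linarith
  have hrγ : r ≤ γ := hr ▸ hγ
  have hγ1 : 0 < γ - 1 := by linarith
  obtain ⟨θ, hθ⟩ : ∃ θ : ℝ, θ = (r - 1) / (γ - 1) := ⟨_, rfl⟩
  have hθ0 : 0 ≤ θ := hθ ▸ div_nonneg (by linarith) hγ1.le
  have hθ1 : 0 ≤ 1 - θ := by
    rw [hθ, sub_nonneg, div_le_one hγ1]; linarith
  have hθr : (1 - θ) + γ * θ = r := by
    rw [hθ]; field_simp; ring
  have hexp : θ * r⁻¹ = ((n : ℝ) - 2) / (2 * (n : ℝ) * (γ - 1)) := by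
    rw [hθ, hr]; field_simp; ring
  have hconj : r⁻¹ + ((n : ℝ) - 2) / (2 * (n : ℝ)) = 1 := by
    rw [hr]; field_simp; ring
  have hp0 : 0 ≤ ((n : ℝ) - 2) / (2 * (n : ℝ)) := by positivity
  obtain ⟨B, hB⟩ : ∃ B : ℝ, B = Real.exp (-(S₀ / c)) * ((γ - 1) / A) := ⟨_, rfl⟩
  have hB0 : 0 < B := by rw [hB]; positivity
  refine ⟨m ^ ((1 - θ) * r⁻¹) * B ^ (θ * r⁻¹), by positivity, ?_⟩
  intro ρ S u hρm hSm hum hρ0 hS hρi hρ1 hρu hui hEi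
  rw [← hexp]
  have hq0 : ∀ x, 0 ≤ ∑ i, (u x i) ^ 2 := fun x => Finset.sum_nonneg fun i _ => sq_nonneg _
  have hργ0 : ∀ x, 0 ≤ ρ x ^ γ := fun x => rpow_nonneg (hρ0 x) _
  have hSe : ∀ x, ρ x ^ γ ≤ Real.exp (-(S₀ / c)) * (Real.exp (S x / c) * ρ x ^ γ) := fun x => by
    rw [← mul_assoc, ← Real.exp_add]
    refine le_mul_of_one_le_left (hργ0 x) (Real.one_le_exp ?_)
    have := div_le_div_of_nonneg_right (hS x) hc.le
    linarith
  have hργi : Integrable fun x => ρ x ^ γ := by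
    refine Integrable.mono' (hEi.const_mul (Real.exp (-(S₀ / c))))
      (hρm.pow_const γ).aestronglyMeasurable (Eventually.of_forall fun x => ?_)
    rw [Real.norm_of_nonneg (hργ0 x)]
    exact hSe x
  obtain ⟨E, hE⟩ : ∃ E : ℝ, E = (A / (γ - 1)) * ∫ x, Real.exp (S x / c) * ρ x ^ γ := ⟨_, rfl⟩
  rw [← hE]
  have hE0 : 0 ≤ E := by
    rw [hE]
    exact mul_nonneg (by positivity)
      (integral_nonneg fun x => mul_nonneg (Real.exp_nonneg _) (hργ0 x))
  have hργE : ∫ x, ρ x ^ γ ≤ B * E := by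
    calc ∫ x, ρ x ^ γ ≤ ∫ x, Real.exp (-(S₀ / c)) * (Real.exp (S x / c) * ρ x ^ γ) :=
          integral_mono hργi (hEi.const_mul _) hSe
      _ = B * E := by
          rw [integral_const_mul, hB, hE]; field_simp
  obtain ⟨hri, hrle⟩ := integral_geom_mean_le hρi hργi hρ0 hργ0 hθ1 hθ0 (by ring)
  have hpt : ∀ x, ρ x ^ (1 - θ) * (ρ x ^ γ) ^ θ = ρ x ^ r := fun x => by
    rw [← rpow_mul (hρ0 x), ← rpow_add' (hρ0 x) (by rw [hθr]; exact hr0.ne'), hθr]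
  simp only [hpt, hρ1] at hri hrle
  have hr00 : ∀ x, 0 ≤ ρ x ^ r := fun x => rpow_nonneg (hρ0 x) _
  obtain ⟨hwi, hwle⟩ := integral_geom_mean_le hri hui hr00
    (fun x => rpow_nonneg (hq0 x) _) (inv_nonneg.2 hr0.le) hp0 hconj
  have hpt2 : ∀ x, (ρ x ^ r) ^ r⁻¹ * ((∑ i, (u x i) ^ 2) ^ ((n : ℝ) / ((n : ℝ) - 2))) ^
      (((n : ℝ) - 2) / (2 * (n : ℝ))) = ρ x * Real.sqrt (∑ i, (u x i) ^ 2) := fun x => by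
    rw [rpow_rpow_inv (hρ0 x) hr0.ne', ← rpow_mul (hq0 x), Real.sqrt_eq_rpow]
    congr 2
    field_simp
  simp only [hpt2] at hwi hwle
  refine (sqrt_sum_integral_sq_le hρ0 hρu hwi).trans (hwle.trans ?_)
  refine mul_le_mul_of_nonneg_right ?_
    (rpow_nonneg (integral_nonneg fun x => rpow_nonneg (hq0 x) _) _)
  have h1 : ∫ x, ρ x ^ r ≤ m ^ (1 - θ) * (B * E) ^ θ :=
    hrle.trans (mul_le_mul_of_nonneg_left
      (rpow_le_rpow (integral_nonneg hργ0) hργE hθ0) (by positivity))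
  refine (rpow_le_rpow (integral_nonneg hr00) h1 (inv_nonneg.2 hr0.le)).trans (le_of_eq ?_)
  have hBE : 0 ≤ B * E := mul_nonneg hB0.le hE0
  rw [mul_rpow (by positivity) (rpow_nonneg hBE _), ← rpow_mul hm.le, ← rpow_mul hBE,
    mul_rpow hB0.le hE0, mul_assoc]
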